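/- Let B : H → H be a β-cocoercive operator (β > 0) with zer B ≠ ∅, and let γ, λ : [0,∞) → (0,∞) be locally absolutely continuous with γ̇(t) ≤ 0 ≤ λ̇(t) and γ²(t)/λ(t) ≥ (1+θ)/β for almost every t, for some θ > 0. Let x : [0,∞) → H be the unique C² global solution of ẍ(t) + γ(t)ẋ(t) + λ(t)B(x(t)) = 0 with x(0) = u₀, ẋ(0) = v₀. Then x is bounded, ẋ, ẍ, B∘x ∈ L²([0,∞); H), ẋ(t) → 0, ẍ(t) → 0, B(x(t)) → 0 as t → ∞, and x(t) converges weakly to a zero of B. -/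

import Mathlib

open Filter MeasureTheory Set Topology
open scoped RealInnerProductSpace

/-!
For a zero `u` of `B`, consider the Lyapunov function
`E(t) = ⟪x - u, ẋ⟫ + γ ‖x - u‖² / 2 + β (γ / λ) ‖ẋ‖²`. Since `γ` and `γ / λ` decrease, their
variation can only lower `E`; cocoercivity and `λ B(x) = -(ẍ + γ ẋ)` then show that `E` loses at
least the integral of `θ ‖ẋ‖² + (β / λ) ‖ẍ‖²`. Because `β γ / λ ≥ 1 / γ`, completing the square
makes `E` dominate `‖x - u‖²` and `‖ẋ‖²`, so `x` and `ẋ` are bounded and `ẋ`, `ẍ` are square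
integrable; the equation gives the same for `B ∘ x`. A square integrable function that is uniformly
continuous, or has a square integrable derivative, tends to `0`. Finally `E` and `γ` converge, the
latter to a positive limit, hence so does `‖x - u‖`, and Opial's lemma gives weak convergence.
-/

lemma exists_mem_Ioo_of_ae_restrict_Ici {p : ℝ → Prop} {a s t : ℝ}
    (hp : ∀ᵐ r ∂volume.restrict (Ici a), p r) (has : a ≤ s) (hst : s < t) :
    ∃ r ∈ Ioo s t, p r := by
  have hp_Ioo : ∀ᵐ r ∂volume.restrict (Ioo s t), p r :=
    ae_restrict_of_ae_restrict_of_subset (fun r hr => has.trans hr.1.le) hp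
  have : (ae (volume.restrict (Ioo s t))).NeBot := by
    rw [ae_neBot, Ne, Measure.restrict_eq_zero]
    simpa using hst
  obtain ⟨r, hr, hrst⟩ := (hp_Ioo.and (ae_restrict_mem measurableSet_Ioo)).exists
  exact ⟨r, hrst, hr⟩

lemma le_of_ae_le_of_antitoneOn_Ici {f : ℝ → ℝ} {a c : ℝ} (hf : AntitoneOn f (Ici a))
    (hc : ∀ᵐ t ∂volume.restrict (Ici a), c ≤ f t) {t : ℝ} (ht : a ≤ t) : c ≤ f t := by
  obtain ⟨s, hs, hcs⟩ := exists_mem_Ioo_of_ae_restrict_Ici hc ht (lt_add_one t)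
  exact hcs.trans (hf ht (ht.trans hs.1.le) hs.1.le)

lemma antitoneOn_div_of_antitoneOn_of_monotoneOn {f g : ℝ → ℝ} {s : Set ℝ}
    (hf : AntitoneOn f s) (hg : MonotoneOn g s) (hf₀ : ∀ t ∈ s, 0 ≤ f t)
    (hg₀ : ∀ t ∈ s, 0 < g t) : AntitoneOn (fun t => f t / g t) s := fun a ha _ hb hab =>
  div_le_div₀ (hf₀ a ha) (hf ha hb hab) (hg₀ a ha) (hg ha hb hab)

lemma exists_tendsto_atTop_of_antitoneOn_Ici {f : ℝ → ℝ} {a m : ℝ} (hf : AntitoneOn f (Ici a))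
    (hm : ∀ t ≥ a, m ≤ f t) : ∃ l, Tendsto f atTop (𝓝 l) := by
  have hanti : Antitone fun t => f (max t a) := fun s t hst =>
    hf (le_max_right s a) (le_max_right t a) (max_le_max_right a hst)
  have hbdd : BddBelow (range fun t => f (max t a)) :=
    ⟨m, forall_mem_range.2 fun t => hm _ (le_max_right t a)⟩
  refine ⟨_, (tendsto_atTop_ciInf hanti hbdd).congr' ?_⟩
  filter_upwards [eventually_ge_atTop a] with t ht
  rw [max_eq_left ht]

lemma integrableOn_Ioc_of_setIntegral_le {g : ℝ → ℝ} {a b C : ℝ}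
    (hg : ∀ᵐ t ∂volume.restrict (Ioc a b), 0 ≤ g t)
    (hint : ∀ c ∈ Ioo a b, IntegrableOn g (Ioc a c))
    (hC : ∀ c ∈ Ioo a b, ∫ t in Ioc a c, g t ≤ C) : IntegrableOn g (Ioc a b) := by
  rcases le_or_gt b a with hba | hab
  · simp [Ioc_eq_empty_of_le hba]
  obtain ⟨u, -, hu, hlim⟩ := exists_seq_strictMono_tendsto' hab
  refine integrableOn_Ioc_of_intervalIntegral_norm_bounded_right (fun n => hint _ (hu n)) hlim
    (Eventually.of_forall fun n => le_of_eq_of_le (integral_congr_ae ?_) (hC _ (hu n)))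
  filter_upwards [ae_restrict_of_ae_restrict_of_subset (Ioc_subset_Ioc_right (hu n).2.le) hg]
    with t ht using Real.norm_of_nonneg ht

section Primitive

variable {f f' : ℝ → ℝ} {a M : ℝ}

/- The integral has the junk value `0` where `f'` is not integrable. If `τ` is the first time at
which integrability fails, then `f` is bounded on `[a, τ)`, so `f'` is integrable there, while `f`
is constant on `(τ, ∞)`, so `f' = 0` there. -/
lemma integrableOn_Ioc_of_eq_add_integral
    (hderiv : ∀ᵐ t ∂volume.restrict (Ici a), HasDerivAt f (f' t) t)
    (hf : ∀ t ≥ a, f t = f a + ∫ s in a..t, f' s)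
    (hnonneg : ∀ᵐ t ∂volume.restrict (Ici a), 0 ≤ f' t)
    (hbdd : ∀ᵐ t ∂volume.restrict (Ici a), f t ≤ M) (T : ℝ) : IntegrableOn f' (Ioc a T) := by
  by_contra hT
  set S : Set ℝ := {t | ¬IntegrableOn f' (Ioc a t)}
  have hS_ge : ∀ t ∈ S, a ≤ t := fun t ht => by
    by_contra! hta
    exact ht (by simp [Ioc_eq_empty_of_le hta.le])
  set τ := sInf S
  have haτ : a ≤ τ := le_csInf ⟨T, hT⟩ hS_ge
  have hnonneg_Ioc (t : ℝ) : ∀ᵐ s ∂volume.restrict (Ioc a t), 0 ≤ f' s :=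
    ae_restrict_of_ae_restrict_of_subset (fun s hs => hs.1.le) hnonneg
  have hint_lt : ∀ t < τ, IntegrableOn f' (Ioc a t) := fun t ht =>
    not_not.1 (notMem_of_lt_csInf ht ⟨a, hS_ge⟩)
  have hleft : IntegrableOn f' (Ioc a τ) := by
    refine integrableOn_Ioc_of_setIntegral_le (hnonneg_Ioc τ) (fun c hc => hint_lt c hc.2)
      (C := M - f a) fun c hc => ?_
    obtain ⟨s, hs, hsM⟩ := exists_mem_Ioo_of_ae_restrict_Ici hbdd hc.1.le hc.2
    have has : a ≤ s := hc.1.le.trans hs.1.le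
    calc ∫ t in Ioc a c, f' t ≤ ∫ t in Ioc a s, f' t :=
          setIntegral_mono_set (hint_lt s hs.2) (hnonneg_Ioc s)
            (Ioc_subset_Ioc_right hs.1.le).eventuallyLE
      _ = f s - f a := by rw [hf s has, intervalIntegral.integral_of_le has]; ring
      _ ≤ M - f a := by gcongr
  have hconst : ∀ t > τ, f t = f a := fun t ht => by
    obtain ⟨s, hs, hst⟩ := exists_lt_of_csInf_lt ⟨T, hT⟩ ht
    have hnot : ¬IntegrableOn f' (Ioc a t) :=
      fun h => hs (h.mono_set (Ioc_subset_Ioc_right hst.le))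
    rw [hf t (haτ.trans ht.le), intervalIntegral.integral_of_le (haτ.trans ht.le),
      integral_undef hnot, add_zero]
  have hright : IntegrableOn f' (Ioi τ) := by
    refine (integrable_zero ℝ ℝ _).congr ?_
    filter_upwards [ae_restrict_of_ae_restrict_of_subset (fun t ht => haτ.trans (le_of_lt ht))
      hderiv, ae_restrict_mem measurableSet_Ioi] with t ht hτt
    have hzero : HasDerivAt f 0 t := (hasDerivAt_const t (f a)).congr_of_eventuallyEq
      (eventually_of_mem (Ioi_mem_nhds hτt) hconst)
    exact hzero.unique ht
  exact hT ((hleft.union hright).mono_set fun t ht => (le_or_gt t τ).imp (fun h => ⟨ht.1, h⟩) id)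

lemma monotoneOn_Ici_of_eq_add_integral
    (hderiv : ∀ᵐ t ∂volume.restrict (Ici a), HasDerivAt f (f' t) t)
    (hf : ∀ t ≥ a, f t = f a + ∫ s in a..t, f' s)
    (hnonneg : ∀ᵐ t ∂volume.restrict (Ici a), 0 ≤ f' t)
    (hbdd : ∀ᵐ t ∂volume.restrict (Ici a), f t ≤ M) : MonotoneOn f (Ici a) := by
  intro s hs t ht hst
  rw [hf s hs, hf t ht, intervalIntegral.integral_of_le hs, intervalIntegral.integral_of_le ht]
  gcongr 1
  exact setIntegral_mono_set (integrableOn_Ioc_of_eq_add_integral hderiv hf hnonneg hbdd t)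
    (ae_restrict_of_ae_restrict_of_subset (fun r hr => hr.1.le) hnonneg)
    (Ioc_subset_Ioc_right hst).eventuallyLE

end Primitive

lemma monotoneOn_mul_sub_mul_of_antitoneOn {c h h' : ℝ → ℝ} {a b K : ℝ}
    (hc : AntitoneOn c (Icc a b)) (hh₀ : ∀ t ∈ Icc a b, 0 ≤ h t)
    (hh : ∀ t ∈ Icc a b, HasDerivWithinAt h (h' t) (Icc a b) t) (hK : ∀ t ∈ Icc a b, ‖h' t‖ ≤ K) :
    MonotoneOn (fun t => max |c a| |c b| * K * t - c t * h t) (Icc a b) := by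
  intro s hs t ht hst
  have hab : a ≤ b := hs.1.trans hs.2
  have hc_bound : |c t| ≤ max |c a| |c b| := by
    rw [max_comm]
    exact abs_le_max_abs_abs (hc ht (right_mem_Icc.2 hab) ht.2) (hc (left_mem_Icc.2 hab) ht ht.1)
  have hh_bound : |h t - h s| ≤ K * |t - s| :=
    (convex_Icc a b).norm_image_sub_le_of_norm_hasDerivWithin_le hh hK hs ht
  have hincr : c t * (h t - h s) ≤ max |c a| |c b| * K * (t - s) := by
    calc c t * (h t - h s) ≤ |c t| * |h t - h s| := (le_abs_self _).trans_eq (abs_mul _ _)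
      _ ≤ max |c a| |c b| * (K * |t - s|) := by gcongr
      _ = max |c a| |c b| * K * (t - s) := by rw [abs_of_nonneg (sub_nonneg.2 hst)]; ring
  have hjump : (c t - c s) * h s ≤ 0 :=
    mul_nonpos_of_nonpos_of_nonneg (sub_nonpos.2 (hc hs ht hst)) (hh₀ s hs)
  simp only
  linarith

/- Lebesgue's inequality `∫ deriv Φ ≤ Φ b - Φ a` for the monotone function `Φ t = L t - c t * h t`,
where `L` is large; the term `-(deriv c) * h` of `deriv Φ` is nonnegative. -/
lemma mul_sub_mul_le_integral_of_antitoneOn {c h h' : ℝ → ℝ} {a b : ℝ} (hab : a ≤ b)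
    (hc : AntitoneOn c (Icc a b)) (hh₀ : ∀ t ∈ Icc a b, 0 ≤ h t)
    (hh : ∀ t ∈ Icc a b, HasDerivWithinAt h (h' t) (Icc a b) t) (hh' : ContinuousOn h' (Icc a b)) :
    c b * h b - c a * h a ≤ ∫ t in a..b, c t * h' t := by
  obtain ⟨K, hK⟩ := isCompact_Icc.exists_bound_of_continuousOn hh'
  set L := max |c a| |c b| * K
  set Φ : ℝ → ℝ := fun t => L * t - c t * h t
  have hΦ_mono : MonotoneOn Φ (Icc a b) := monotoneOn_mul_sub_mul_of_antitoneOn hc hh₀ hh hK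
  have hch'_int : IntervalIntegrable (fun t => c t * h' t) volume a b := by
    rw [← uIcc_of_le hab] at hc hh'
    exact hc.intervalIntegrable.mul_continuousOn hh'
  have hderiv_ge : ∀ᵐ t ∂volume.restrict (Icc a b), L - c t * h' t ≤ deriv Φ t := by
    rw [← restrict_Ioo_eq_restrict_Icc, ae_restrict_iff' measurableSet_Ioo]
    filter_upwards [hc.neg.ae_differentiableWithinAt_of_mem] with t hct ht
    have htI : t ∈ Icc a b := Ioo_subset_Icc_self ht
    have hnhds : Icc a b ∈ 𝓝 t := Icc_mem_nhds ht.1 ht.2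
    have hcd : DifferentiableAt ℝ c t := by simpa using ((hct htI).differentiableAt hnhds).neg
    have hc_nonpos : deriv c t ≤ 0 := by
      rw [← derivWithin_of_mem_nhds hnhds]
      exact hc.derivWithin_nonpos
    have hΦd : HasDerivAt Φ (L * 1 - (deriv c t * h t + c t * h' t)) t :=
      ((hasDerivAt_id t).const_mul L).sub (hcd.hasDerivAt.mul ((hh t htI).hasDerivAt hnhds))
    rw [hΦd.deriv]
    linarith [mul_nonpos_of_nonpos_of_nonneg hc_nonpos (hh₀ t htI)]
  rw [← uIcc_of_le hab] at hΦ_mono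
  have hle : ∫ t in a..b, (L - c t * h' t) ≤ ∫ t in a..b, deriv Φ t :=
    intervalIntegral.integral_mono_ae_restrict hab (intervalIntegrable_const.sub hch'_int)
      hΦ_mono.intervalIntegrable_deriv hderiv_ge
  have hLebesgue : ∫ t in a..b, deriv Φ t ≤ Φ b - Φ a := by
    have hmem := hΦ_mono.intervalIntegral_deriv_mem_uIcc
    rw [uIcc_of_le (sub_nonneg.2 (hΦ_mono left_mem_uIcc right_mem_uIcc hab))] at hmem
    exact hmem.2
  rw [intervalIntegral.integral_sub intervalIntegrable_const hch'_int,
    intervalIntegral.integral_const, smul_eq_mul] at hle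
  simp only [Φ] at hLebesgue
  linarith

lemma integrableOn_Ici_of_intervalIntegral_le {f : ℝ → ℝ} {a C : ℝ}
    (hf : ContinuousOn f (Ici a)) (hf₀ : ∀ t ≥ a, 0 ≤ f t)
    (hC : ∀ t ≥ a, ∫ s in a..t, f s ≤ C) : IntegrableOn f (Ici a) := by
  rw [integrableOn_Ici_iff_integrableOn_Ioi]
  refine integrableOn_Ioi_of_intervalIntegral_norm_bounded C a (fun t => ?_) tendsto_id ?_
  · exact ((hf.mono Icc_subset_Ici_self).integrableOn_compact isCompact_Icc).mono_set
      Ioc_subset_Icc_self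
  filter_upwards [eventually_ge_atTop a] with t ht
  refine le_of_eq_of_le (intervalIntegral.integral_congr fun s hs => ?_) (hC t ht)
  rw [id, uIcc_of_le ht] at hs
  exact Real.norm_of_nonneg (hf₀ s hs.1)

lemma tendsto_zero_of_uniformContinuousOn_of_integrableOn_norm_pow {E : Type*}
    [NormedAddCommGroup E] {f : ℝ → E} {a : ℝ} {n : ℕ} (hf : UniformContinuousOn f (Ici a))
    (hint : IntegrableOn (fun t => ‖f t‖ ^ n) (Ici a)) : Tendsto f atTop (𝓝 0) := by
  rw [Metric.tendsto_nhds]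
  intro ε hε
  obtain ⟨δ, hδ, hδf⟩ := Metric.uniformContinuousOn_iff_le.1 hf (ε / 2) (half_pos hε)
  have hprimitive := intervalIntegral_tendsto_integral_Ioi a (hint.mono_set Ioi_subset_Ici_self)
    tendsto_id
  have hwindow : Tendsto (fun t => (∫ s in a..t + δ, ‖f s‖ ^ n) - ∫ s in a..t, ‖f s‖ ^ n)
      atTop (𝓝 0) := by
    simpa using (hprimitive.comp (tendsto_atTop_add_const_right _ δ tendsto_id)).sub hprimitive
  have hII {s t : ℝ} (hs : a ≤ s) (ht : a ≤ t) :
      IntervalIntegrable (fun r => ‖f r‖ ^ n) volume s t :=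
    intervalIntegrable_iff.2 (hint.mono_set fun r hr => (le_min hs ht).trans hr.1.le)
  filter_upwards [hwindow.eventually_lt_const (by positivity : 0 < δ * (ε / 2) ^ n),
    eventually_ge_atTop a] with t hsmall hat
  have hatδ : a ≤ t + δ := by linarith
  rw [intervalIntegral.integral_interval_sub_left (hII le_rfl hatδ) (hII le_rfl hat)] at hsmall
  rw [dist_zero_right]
  by_contra! hlarge
  have hnorm_ge : ∀ s ∈ Icc t (t + δ), (ε / 2) ^ n ≤ ‖f s‖ ^ n := fun s hs => by
    have hdist : ‖f t - f s‖ ≤ ε / 2 := by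
      rw [← dist_eq_norm]
      refine hδf t hat s (hat.trans hs.1) ?_
      rw [dist_comm, Real.dist_eq, abs_of_nonneg (sub_nonneg.2 hs.1)]
      linarith [hs.2]
    gcongr
    linarith [norm_le_insert (f t) (f s), norm_sub_norm_le (f t) (f s)]
  have hge := intervalIntegral.integral_mono_on (by linarith) intervalIntegrable_const
    (hII hat hatδ) hnorm_ge
  rw [intervalIntegral.integral_const, smul_eq_mul, add_sub_cancel_left] at hge
  exact hge.not_gt hsmall

section InnerProductSpace

variable {H : Type*} [NormedAddCommGroup H] [InnerProductSpace ℝ H]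

lemma tendsto_zero_of_integrableOn_sq_norm_deriv {f f' : ℝ → H} {a : ℝ}
    (hf : ∀ t > a, HasDerivAt f (f' t) t) (hf' : ContinuousOn f' (Ioi a))
    (hfint : IntegrableOn (fun t => ‖f t‖ ^ 2) (Ioi a))
    (hf'int : IntegrableOn (fun t => ‖f' t‖ ^ 2) (Ioi a)) : Tendsto f atTop (𝓝 0) := by
  have hf_cont : ContinuousOn f (Ioi a) := fun t ht => (hf t ht).continuousAt.continuousWithinAt
  have hinner : IntegrableOn (fun t => 2 * ⟪f t, f' t⟫) (Ioi a) := by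
    refine Integrable.mono' (hfint.add hf'int)
      ((continuousOn_const.mul (hf_cont.inner hf')).aestronglyMeasurable measurableSet_Ioi)
      (ae_of_all _ fun t => ?_)
    rw [norm_mul, Real.norm_two, Pi.add_apply]
    nlinarith [norm_inner_le_norm (𝕜 := ℝ) (f t) (f' t), sq_nonneg (‖f t‖ - ‖f' t‖)]
  have hsq := tendsto_zero_of_hasDerivAt_of_integrableOn_Ioi (fun t ht => (hf t ht).norm_sq)
    hinner hfint
  simpa [tendsto_zero_iff_norm_tendsto_zero] using hsq.sqrt

section Weak

variable {ι : Type*} {l : Filter ι} {x : ι → H} {p : H}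

/-- Weak convergence of `x` to `p` along the filter `l`, tested against the inner products with
fixed vectors. -/
def TendstoWeakly (x : ι → H) (l : Filter ι) (p : H) : Prop :=
  ∀ z : H, Tendsto (fun t => ⟪x t, z⟫) l (𝓝 ⟪p, z⟫)

lemma exists_tendstoWeakly_ultrafilter [CompleteSpace H] {U : Ultrafilter ι} {C : ℝ}
    (hC : ∀ᶠ t in U, ‖x t‖ ≤ C) : ∃ p, TendstoWeakly x U p := by
  let φ : ι → WeakDual ℝ H := fun t => StrongDual.toWeakDual (InnerProductSpace.toDual ℝ H (x t))
  have hφ : ∀ᶠ t in U, φ t ∈ WeakDual.toStrongDual ⁻¹' Metric.closedBall 0 C := by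
    filter_upwards [hC] with t ht
    simpa [φ] using ht
  obtain ⟨q, -, hq⟩ := isCompact_iff_ultrafilter_le_nhds.1
    (WeakDual.isCompact_closedBall (𝕜 := ℝ) (0 : StrongDual ℝ H) C) (U.map φ)
    (le_principal_iff.2 hφ)
  refine ⟨(InnerProductSpace.toDual ℝ H).symm (WeakDual.toStrongDual q), fun z => ?_⟩
  rw [InnerProductSpace.toDual_symm_apply]
  exact ((WeakDual.eval_continuous z).tendsto q).comp (show Tendsto φ U (𝓝 q) from hq)

/- Polarization: the limits of `‖x t - p‖` and `‖x t - q‖` determine that of `⟪x t, p - q⟫`, so two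
weak cluster points `p` and `q` satisfy `⟪p, p - q⟫ = ⟪q, p - q⟫`. -/
lemma eq_of_tendstoWeakly_of_tendsto_norm_sub {l₁ l₂ : Filter ι} [l₁.NeBot] [l₂.NeBot]
    (hl₁ : l₁ ≤ l) (hl₂ : l₂ ≤ l) {p q : H} {r s : ℝ} (hp : TendstoWeakly x l₁ p)
    (hq : TendstoWeakly x l₂ q) (hr : Tendsto (fun t => ‖x t - p‖) l (𝓝 r))
    (hs : Tendsto (fun t => ‖x t - q‖) l (𝓝 s)) : p = q := by
  have hpolar : ∀ t, (‖x t - q‖ ^ 2 - ‖x t - p‖ ^ 2 + (‖p‖ ^ 2 - ‖q‖ ^ 2)) / 2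
      = ⟪x t, p - q⟫ := fun t => by
    rw [norm_sub_sq_real, norm_sub_sq_real, inner_sub_right]
    ring
  have hlim := (((hs.pow 2).sub (hr.pow 2)).add_const (‖p‖ ^ 2 - ‖q‖ ^ 2)).div_const 2
  simp only [hpolar] at hlim
  have hp_eq := tendsto_nhds_unique (hp (p - q)) (hlim.mono_left hl₁)
  have hq_eq := tendsto_nhds_unique (hq (p - q)) (hlim.mono_left hl₂)
  rw [← sub_eq_zero, ← inner_self_eq_zero (𝕜 := ℝ), inner_sub_left, hp_eq, hq_eq, sub_self]

/-- Opial's lemma. -/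
lemma exists_tendstoWeakly_of_forall_tendsto_norm_sub [CompleteSpace H] [l.NeBot] {S : Set H}
    (hS : S.Nonempty) (hlim : ∀ u ∈ S, ∃ r, Tendsto (fun t => ‖x t - u‖) l (𝓝 r))
    (hcluster : ∀ (U : Ultrafilter ι) (p : H), ↑U ≤ l → TendstoWeakly x U p → p ∈ S) :
    ∃ p ∈ S, TendstoWeakly x l p := by
  obtain ⟨u, hu⟩ := hS
  obtain ⟨r, hr⟩ := hlim u hu
  have hbdd : ∀ᶠ t in l, ‖x t‖ ≤ ‖u‖ + (r + 1) := by
    filter_upwards [hr.eventually_le_const (lt_add_one r)] with t ht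
    exact (norm_le_norm_add_norm_sub' (x t) u).trans (by gcongr)
  have hexists (U : Ultrafilter ι) (hU : ↑U ≤ l) : ∃ p ∈ S, TendstoWeakly x U p := by
    obtain ⟨p, hp⟩ := exists_tendstoWeakly_ultrafilter (hU hbdd)
    exact ⟨p, hcluster U p hU hp, hp⟩
  obtain ⟨p, hpS, hp⟩ := hexists (Ultrafilter.of l) (Ultrafilter.of_le l)
  refine ⟨p, hpS, fun z => (tendsto_iff_ultrafilter _ _ _).2 fun U hU => ?_⟩
  obtain ⟨q, hqS, hq⟩ := hexists U hU
  obtain ⟨rp, hrp⟩ := hlim p hpS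
  obtain ⟨rq, hrq⟩ := hlim q hqS
  obtain rfl : p = q :=
    eq_of_tendstoWeakly_of_tendsto_norm_sub (Ultrafilter.of_le l) hU hp hq hrp hrq
  exact hq z

end Weak

/-- `β`-cocoercivity of an operator `B` on a real inner product space. -/
def Cocoercive (β : ℝ) (B : H → H) : Prop :=
  ∀ a c : H, β * ‖B a - B c‖ ^ 2 ≤ ⟪a - c, B a - B c⟫

namespace Cocoercive

variable {β : ℝ} {B : H → H}

lemma lipschitzWith (hB : Cocoercive β B) (hβ : 0 < β) : LipschitzWith (Real.toNNReal β⁻¹) B := by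
  refine LipschitzWith.of_dist_le' fun a c => ?_
  rw [dist_eq_norm, dist_eq_norm, le_inv_mul_iff₀ hβ]
  rcases (norm_nonneg (B a - B c)).eq_or_lt with hzero | hpos
  · simp [← hzero]
  · refine le_of_mul_le_mul_right ?_ hpos
    calc β * ‖B a - B c‖ * ‖B a - B c‖ = β * ‖B a - B c‖ ^ 2 := by ring
      _ ≤ ⟪a - c, B a - B c⟫ := hB a c
      _ ≤ ‖a - c‖ * ‖B a - B c‖ := real_inner_le_norm _ _

lemma eq_of_tendstoWeakly {ι : Type*} {l : Filter ι} [l.NeBot] {x : ι → H} {p b : H} {C : ℝ}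
    (hB : Cocoercive β B) (hβ : 0 < β) (hC : ∀ᶠ t in l, ‖x t‖ ≤ C) (hx : TendstoWeakly x l p)
    (hBx : Tendsto (fun t => B (x t)) l (𝓝 b)) : B p = b := by
  have hstrong : Tendsto (fun t => ⟪x t - p, B (x t) - b⟫) l (𝓝 0) := by
    have hbound : Tendsto (fun t => (C + ‖p‖) * ‖B (x t) - b‖) l (𝓝 0) := by
      simpa using (hBx.sub_const b).norm.const_mul (C + ‖p‖)
    refine squeeze_zero_norm' ?_ hbound
    filter_upwards [hC] with t ht
    refine (norm_inner_le_norm _ _).trans ?_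
    gcongr
    exact (norm_sub_le _ _).trans (by gcongr)
  have hweak : Tendsto (fun t => ⟪x t - p, b - B p⟫) l (𝓝 0) := by
    simpa [inner_sub_left] using (hx (b - B p)).sub_const ⟪p, b - B p⟫
  have hinner : Tendsto (fun t => ⟪x t - p, B (x t) - B p⟫) l (𝓝 0) := by
    simpa [← inner_add_right] using hstrong.add hweak
  have hnorm : β * ‖b - B p‖ ^ 2 ≤ 0 :=
    le_of_tendsto_of_tendsto' (((hBx.sub_const (B p)).norm.pow 2).const_mul β) hinner
      fun t => hB (x t) p
  have hsq : ‖b - B p‖ ^ 2 = 0 := le_antisymm (nonpos_of_mul_nonpos_right hnorm hβ) (sq_nonneg _)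
  rw [pow_eq_zero_iff two_ne_zero, norm_sub_eq_zero_iff] at hsq
  exact hsq.symm

end Cocoercive

/-- The conditions on the damping `γ` and the stiffness `lam` of the second order dynamics, without
derivatives: monotonicity replaces the signs of `γ'` and `lam'`, and `(1 + θ) / β ≤ γ ^ 2 / lam` is
written without division. -/
structure AdmissibleCoefficients (β θ : ℝ) (γ lam : ℝ → ℝ) : Prop where
  γ_pos : ∀ t ≥ 0, 0 < γ t
  lam_pos : ∀ t ≥ 0, 0 < lam t
  antitoneOn : AntitoneOn γ (Ici 0)
  monotoneOn : MonotoneOn lam (Ici 0)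
  one_add_mul_le : ∀ t ≥ 0, (1 + θ) * lam t ≤ β * γ t ^ 2

namespace AdmissibleCoefficients

variable {β θ : ℝ} {γ lam : ℝ → ℝ}

lemma of_ae_deriv {γ' lam' : ℝ → ℝ} (hβ : 0 < β) (hθ : 0 < θ)
    (hγ_pos : ∀ t ≥ 0, 0 < γ t) (hlam_pos : ∀ t ≥ 0, 0 < lam t)
    (hγ_deriv : ∀ᵐ t ∂volume.restrict (Ici 0), HasDerivAt γ (γ' t) t)
    (hlam_deriv : ∀ᵐ t ∂volume.restrict (Ici 0), HasDerivAt lam (lam' t) t)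
    (hγ : ∀ t ≥ 0, γ t = γ 0 + ∫ s in 0..t, γ' s)
    (hlam : ∀ t ≥ 0, lam t = lam 0 + ∫ s in 0..t, lam' s)
    (hA : ∀ᵐ t ∂volume.restrict (Ici 0), γ' t ≤ 0 ∧ 0 ≤ lam' t ∧ (1 + θ) / β ≤ γ t ^ 2 / lam t) :
    AdmissibleCoefficients β θ γ lam := by
  have hγ_anti : AntitoneOn γ (Ici 0) := by
    refine neg_neg γ ▸ (monotoneOn_Ici_of_eq_add_integral (f' := -γ') (M := 0)
      (hγ_deriv.mono fun t ht => ht.neg) (fun t ht => ?_)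
      (hA.mono fun t ht => neg_nonneg.2 ht.1) ?_).neg
    · simp only [Pi.neg_apply, intervalIntegral.integral_neg, hγ t ht, neg_add]
    · filter_upwards [ae_restrict_mem measurableSet_Ici] with t ht
      exact neg_nonpos.2 (hγ_pos t ht).le
  have hγ_sq_anti : AntitoneOn (fun t => γ t ^ 2) (Ici 0) := fun s hs t ht hst =>
    pow_le_pow_left₀ (hγ_pos t ht).le (hγ_anti hs ht hst) 2
  have hlam_bdd : ∀ᵐ t ∂volume.restrict (Ici 0), lam t ≤ β * γ 0 ^ 2 / (1 + θ) := by
    filter_upwards [hA, ae_restrict_mem measurableSet_Ici] with t ht ht₀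
    have hle := (div_le_div_iff₀ hβ (hlam_pos t ht₀)).1 ht.2.2
    rw [le_div_iff₀ (by positivity), mul_comm, mul_comm β]
    exact hle.trans (mul_le_mul_of_nonneg_right (hγ_sq_anti self_mem_Ici ht₀ ht₀) hβ.le)
  have hlam_mono : MonotoneOn lam (Ici 0) := monotoneOn_Ici_of_eq_add_integral hlam_deriv hlam
    (hA.mono fun t ht => ht.2.1) hlam_bdd
  have hquot_anti : AntitoneOn (fun t => γ t ^ 2 / lam t) (Ici 0) :=
    antitoneOn_div_of_antitoneOn_of_monotoneOn hγ_sq_anti hlam_mono (fun t _ => sq_nonneg _)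
      hlam_pos
  refine ⟨hγ_pos, hlam_pos, hγ_anti, hlam_mono, fun t ht => ?_⟩
  rw [mul_comm β, ← div_le_div_iff₀ hβ (hlam_pos t ht)]
  exact le_of_ae_le_of_antitoneOn_Ici hquot_anti (hA.mono fun t ht => ht.2.2) ht

variable (hc : AdmissibleCoefficients β θ γ lam)

include hc

lemma γ_le {t : ℝ} (ht : 0 ≤ t) : γ t ≤ γ 0 := hc.antitoneOn self_mem_Ici ht ht

lemma le_lam {t : ℝ} (ht : 0 ≤ t) : lam 0 ≤ lam t := hc.monotoneOn self_mem_Ici ht ht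

lemma antitoneOn_div : AntitoneOn (fun t => γ t / lam t) (Ici 0) :=
  antitoneOn_div_of_antitoneOn_of_monotoneOn hc.antitoneOn hc.monotoneOn
    (fun t ht => (hc.γ_pos t ht).le) hc.lam_pos

lemma lam_le (hβ : 0 < β) (hθ : 0 < θ) {t : ℝ} (ht : 0 ≤ t) :
    lam t ≤ β * γ 0 ^ 2 / (1 + θ) := by
  rw [le_div_iff₀ (by positivity), mul_comm]
  refine (hc.one_add_mul_le t ht).trans ?_
  have hγ := (hc.γ_pos t ht).le
  gcongr
  exact hc.γ_le ht

lemma exists_pos_le_γ (hβ : 0 < β) (hθ : 0 < θ) : ∃ g > 0, ∀ t ≥ 0, g ≤ γ t := by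
  have hlam₀ := hc.lam_pos 0 le_rfl
  refine ⟨√((1 + θ) * lam 0 / β), by positivity, fun t ht => ?_⟩
  rw [Real.sqrt_le_left (hc.γ_pos t ht).le, div_le_iff₀' hβ]
  exact le_trans (by gcongr; exact hc.le_lam ht) (hc.one_add_mul_le t ht)

end AdmissibleCoefficients

section Integral

variable {f f' g g' : ℝ → H} {a b : ℝ}

lemma integral_inner_add_inner_eq_sub (hab : a ≤ b)
    (hf : ∀ t ∈ Icc a b, HasDerivWithinAt f (f' t) (Icc a b) t)
    (hg : ∀ t ∈ Icc a b, HasDerivWithinAt g (g' t) (Icc a b) t)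
    (hint : IntervalIntegrable (fun t => ⟪f t, g' t⟫ + ⟪f' t, g t⟫) volume a b) :
    ∫ t in a..b, (⟪f t, g' t⟫ + ⟪f' t, g t⟫) = ⟪f b, g b⟫ - ⟪f a, g a⟫ := by
  have hfg := fun t ht => (hf t ht).inner ℝ (hg t ht)
  exact intervalIntegral.integral_eq_sub_of_hasDerivAt_of_le hab
    (HasDerivWithinAt.continuousOn hfg)
    (fun t ht => (hfg t (Ioo_subset_Icc_self ht)).hasDerivAt (Icc_mem_nhds ht.1 ht.2)) hint

lemma mul_norm_sq_sub_le_integral_of_antitoneOn {c : ℝ → ℝ} (hab : a ≤ b)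
    (hc : AntitoneOn c (Icc a b)) (hf : ∀ t ∈ Icc a b, HasDerivWithinAt f (f' t) (Icc a b) t)
    (hf' : ContinuousOn f' (Icc a b)) :
    c b * (‖f b‖ ^ 2 / 2) - c a * (‖f a‖ ^ 2 / 2) ≤ ∫ t in a..b, c t * ⟪f t, f' t⟫ :=
  mul_sub_mul_le_integral_of_antitoneOn (h := fun t => ‖f t‖ ^ 2 / 2) hab hc
    (fun t _ => by positivity) (fun t ht => by simpa using (hf t ht).norm_sq.div_const 2)
    ((HasDerivWithinAt.continuousOn hf).inner hf')

end Integral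

/-- `x` is a classical solution of `ẍ + γ ẋ + lam B(x) = 0` on `[0, ∞)`, with velocity `xd` and
continuous acceleration `xdd`. -/
structure IsTrajectory (B : H → H) (γ lam : ℝ → ℝ) (x xd xdd : ℝ → H) : Prop where
  hasDerivWithinAt : ∀ t ≥ 0, HasDerivWithinAt x (xd t) (Ici 0) t
  hasDerivWithinAt_velocity : ∀ t ≥ 0, HasDerivWithinAt xd (xdd t) (Ici 0) t
  continuousOn_acceleration : ContinuousOn xdd (Ici 0)
  ode : ∀ t ≥ 0, xdd t + γ t • xd t + lam t • B (x t) = 0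

/-- The Lyapunov function of the dynamics at the zero `u` of the operator. -/
noncomputable def energy (β : ℝ) (γ lam : ℝ → ℝ) (x xd : ℝ → H) (u : H) (t : ℝ) : ℝ :=
  ⟪x t - u, xd t⟫ + γ t * (‖x t - u‖ ^ 2 / 2) + 2 * β * (γ t / lam t * (‖xd t‖ ^ 2 / 2))

/-- The derivative of `energy` with the coefficients `γ` and `γ / lam` frozen; since both decrease,
it bounds the growth of `energy` from above. -/
noncomputable def energyRate (β : ℝ) (γ lam : ℝ → ℝ) (x xd xdd : ℝ → H) (u : H) (t : ℝ) : ℝ :=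
  ⟪x t - u, xdd t⟫ + ⟪xd t, xd t⟫ + γ t * ⟪x t - u, xd t⟫
    + 2 * β * (γ t / lam t * ⟪xd t, xdd t⟫)

/- The weights of the three summands make the cross terms `⟪v, a⟫` cancel, once cocoercivity has
turned `-⟪y, l • b⟫` into `-β / l * ‖a + g • v‖ ^ 2`. -/
lemma inner_add_inner_self_le_neg_of_add_eq_zero {β θ g l : ℝ} {y v a b : H} (hl : 0 < l)
    (hle : (1 + θ) * l ≤ β * g ^ 2) (hode : a + g • v + l • b = 0) (hb : β * ‖b‖ ^ 2 ≤ ⟪y, b⟫) :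
    ⟪y, a⟫ + ⟪v, v⟫ + g * ⟪y, v⟫ + 2 * β * (g / l * ⟪v, a⟫) ≤
      -(θ * ‖v‖ ^ 2 + β / l * ‖a‖ ^ 2) := by
  have hforce : ⟪y, a⟫ + g * ⟪y, v⟫ = -(l * ⟪y, b⟫) := by
    have hinner := congrArg (inner ℝ y) hode
    simp only [inner_add_right, inner_smul_right, inner_zero_right] at hinner
    linarith
  have hnorm : l ^ 2 * ‖b‖ ^ 2 = ‖a‖ ^ 2 + 2 * g * ⟪v, a⟫ + g ^ 2 * ‖v‖ ^ 2 := by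
    rw [← mul_pow, ← Real.norm_of_nonneg hl.le, ← norm_smul, ← norm_neg,
      ← eq_neg_of_add_eq_zero_left hode, norm_add_sq_real, norm_smul, inner_smul_right, mul_pow,
      real_inner_comm, Real.norm_eq_abs, sq_abs]
    ring
  have hcoco : β / l * (‖a‖ ^ 2 + 2 * g * ⟪v, a⟫ + g ^ 2 * ‖v‖ ^ 2) ≤ l * ⟪y, b⟫ := by
    calc β / l * (‖a‖ ^ 2 + 2 * g * ⟪v, a⟫ + g ^ 2 * ‖v‖ ^ 2) = l * (β * ‖b‖ ^ 2) := by
          rw [← hnorm]; field_simp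
      _ ≤ l * ⟪y, b⟫ := by gcongr
  have hdamp : (1 + θ) * ‖v‖ ^ 2 ≤ β / l * g ^ 2 * ‖v‖ ^ 2 := by
    gcongr
    rwa [div_mul_eq_mul_div, le_div_iff₀ hl]
  have hcross : 2 * β * (g / l * ⟪v, a⟫) = β / l * (2 * g * ⟪v, a⟫) := by ring
  linarith [real_inner_self_eq_norm_sq v]

lemma norm_sq_add_norm_sq_le_inner_add {g c : ℝ} {y v : H} (hg : 0 < g) (hc : 1 / g ≤ c) :
    g / 8 * ‖y‖ ^ 2 + 1 / (3 * g) * ‖v‖ ^ 2 ≤ ⟪y, v⟫ + g * (‖y‖ ^ 2 / 2) + c * ‖v‖ ^ 2 := by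
  have hsquare : 3 / (8 * g) * ‖g • y + (4 / 3 : ℝ) • v‖ ^ 2
      = ⟪y, v⟫ + 3 * g / 8 * ‖y‖ ^ 2 + 2 / (3 * g) * ‖v‖ ^ 2 := by
    rw [norm_add_sq_real, norm_smul, norm_smul, inner_smul_left, inner_smul_right, mul_pow, mul_pow,
      Real.norm_eq_abs, sq_abs, Real.norm_eq_abs, sq_abs, conj_trivial]
    field_simp
    ring
  have hsquare_nonneg : 0 ≤ 3 / (8 * g) * ‖g • y + (4 / 3 : ℝ) • v‖ ^ 2 := by positivity
  have hc_mul : 1 / g * ‖v‖ ^ 2 ≤ c * ‖v‖ ^ 2 := by gcongr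
  have hsplit : 1 / g * ‖v‖ ^ 2 = 1 / (3 * g) * ‖v‖ ^ 2 + 2 / (3 * g) * ‖v‖ ^ 2 := by
    field_simp
    ring
  linarith

namespace AdmissibleCoefficients

variable {β θ : ℝ} {γ lam : ℝ → ℝ} (hc : AdmissibleCoefficients β θ γ lam) (hθ : 0 < θ)
  (x xd : ℝ → H) (u : H) {t : ℝ} (ht : 0 ≤ t)

include hc hθ ht

lemma norm_sq_add_norm_sq_le_energy :
    γ t / 8 * ‖x t - u‖ ^ 2 + 1 / (3 * γ t) * ‖xd t‖ ^ 2 ≤ energy β γ lam x xd u t := by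
  have hγ := hc.γ_pos t ht
  have hlam := hc.lam_pos t ht
  have hweight : 1 / γ t ≤ β * (γ t / lam t) := by
    rw [← mul_div_assoc, div_le_div_iff₀ hγ hlam, mul_assoc, ← sq]
    exact (mul_le_mul_of_nonneg_right (le_add_of_nonneg_right hθ.le) hlam.le).trans
      (hc.one_add_mul_le t ht)
  refine (norm_sq_add_norm_sq_le_inner_add hγ hweight).trans_eq ?_
  simp only [energy]
  ring

lemma energy_nonneg : 0 ≤ energy β γ lam x xd u t := by
  have hγ := hc.γ_pos t ht
  exact le_trans (by positivity) (hc.norm_sq_add_norm_sq_le_energy hθ x xd u ht)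

end AdmissibleCoefficients

namespace IsTrajectory

variable {β θ : ℝ} {B : H → H} {γ lam : ℝ → ℝ} {x xd xdd : ℝ → H} {u : H}

lemma continuousOn (hx : IsTrajectory B γ lam x xd xdd) : ContinuousOn x (Ici 0) :=
  fun t ht => (hx.hasDerivWithinAt t ht).continuousWithinAt

lemma continuousOn_velocity (hx : IsTrajectory B γ lam x xd xdd) : ContinuousOn xd (Ici 0) :=
  fun t ht => (hx.hasDerivWithinAt_velocity t ht).continuousWithinAt

lemma energyRate_le (hx : IsTrajectory B γ lam x xd xdd) (hB : Cocoercive β B) (hβ : 0 < β)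
    (hc : AdmissibleCoefficients β θ γ lam) (hu : B u = 0) {t : ℝ} (ht : 0 ≤ t) :
    energyRate β γ lam x xd xdd u t ≤
      -(θ * ‖xd t‖ ^ 2 + (1 + θ) / γ 0 ^ 2 * ‖xdd t‖ ^ 2) := by
  have hγ := hc.γ_pos t ht
  have hlam := hc.lam_pos t ht
  have hcoeff : (1 + θ) / γ 0 ^ 2 ≤ β / lam t := by
    rw [div_le_div_iff₀ (pow_pos (hc.γ_pos 0 le_rfl) 2) hlam]
    refine (hc.one_add_mul_le t ht).trans ?_
    gcongr
    exact hc.γ_le ht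
  refine (inner_add_inner_self_le_neg_of_add_eq_zero hlam (hc.one_add_mul_le t ht)
    (hx.ode t ht) ?_).trans ?_
  · simpa [hu] using hB (x t) u
  · gcongr

lemma energy_sub_energy_le_integral (hx : IsTrajectory B γ lam x xd xdd) (hβ : 0 < β)
    (hc : AdmissibleCoefficients β θ γ lam) (u : H) {s t : ℝ} (hs : 0 ≤ s) (hst : s ≤ t) :
    IntervalIntegrable (energyRate β γ lam x xd xdd u) volume s t ∧
      energy β γ lam x xd u t - energy β γ lam x xd u s ≤
        ∫ r in s..t, energyRate β γ lam x xd xdd u r := by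
  have hsub : Icc s t ⊆ Ici 0 := fun r hr => hs.trans hr.1
  have hsub' : uIcc s t ⊆ Ici 0 := uIcc_of_le hst ▸ hsub
  have hx_cont := hx.continuousOn.mono hsub'
  have hxd_cont := hx.continuousOn_velocity.mono hsub'
  have hxdd_cont := hx.continuousOn_acceleration.mono hsub'
  have hx_deriv : ∀ r ∈ Icc s t, HasDerivWithinAt (fun r => x r - u) (xd r) (Icc s t) r :=
    fun r hr => ((hx.hasDerivWithinAt r (hsub hr)).mono hsub).sub_const u
  have hxd_deriv : ∀ r ∈ Icc s t, HasDerivWithinAt xd (xdd r) (Icc s t) r :=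
    fun r hr => (hx.hasDerivWithinAt_velocity r (hsub hr)).mono hsub
  have hinner_int : IntervalIntegrable (fun r => ⟪x r - u, xdd r⟫ + ⟪xd r, xd r⟫) volume s t :=
    ContinuousOn.intervalIntegrable (by fun_prop)
  have hdist_int : IntervalIntegrable (fun r => γ r * ⟪x r - u, xd r⟫) volume s t :=
    (hc.antitoneOn.mono hsub').intervalIntegrable.mul_continuousOn (by fun_prop)
  have hkinetic_int : IntervalIntegrable (fun r => γ r / lam r * ⟪xd r, xdd r⟫) volume s t :=
    (hc.antitoneOn_div.mono hsub').intervalIntegrable.mul_continuousOn (by fun_prop)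
  have hinner := integral_inner_add_inner_eq_sub hst hx_deriv hxd_deriv hinner_int
  have hdist := mul_norm_sq_sub_le_integral_of_antitoneOn hst (hc.antitoneOn.mono hsub) hx_deriv
    (hx.continuousOn_velocity.mono hsub)
  have hkinetic := mul_norm_sq_sub_le_integral_of_antitoneOn hst (hc.antitoneOn_div.mono hsub)
    hxd_deriv (hx.continuousOn_acceleration.mono hsub)
  refine ⟨(hinner_int.add hdist_int).add (hkinetic_int.const_mul (2 * β)), ?_⟩
  simp only [energy, energyRate]
  rw [intervalIntegral.integral_add (hinner_int.add hdist_int) (hkinetic_int.const_mul (2 * β)),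
    intervalIntegral.integral_add hinner_int hdist_int, intervalIntegral.integral_const_mul, hinner]
  linarith [mul_le_mul_of_nonneg_left hkinetic (by positivity : 0 ≤ 2 * β)]

lemma energy_add_integral_le (hx : IsTrajectory B γ lam x xd xdd) (hB : Cocoercive β B)
    (hβ : 0 < β) (hc : AdmissibleCoefficients β θ γ lam) (hu : B u = 0) {s t : ℝ} (hs : 0 ≤ s)
    (hst : s ≤ t) :
    energy β γ lam x xd u t + ∫ r in s..t, (θ * ‖xd r‖ ^ 2 + (1 + θ) / γ 0 ^ 2 * ‖xdd r‖ ^ 2) ≤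
      energy β γ lam x xd u s := by
  obtain ⟨hrate_int, hle⟩ := hx.energy_sub_energy_le_integral hβ hc u hs hst
  have hsub : uIcc s t ⊆ Ici 0 := uIcc_of_le hst ▸ fun r hr => hs.trans hr.1
  have hxd_cont := hx.continuousOn_velocity.mono hsub
  have hxdd_cont := hx.continuousOn_acceleration.mono hsub
  have hdissipation_int : IntervalIntegrable
      (fun r => θ * ‖xd r‖ ^ 2 + (1 + θ) / γ 0 ^ 2 * ‖xdd r‖ ^ 2) volume s t :=
    ContinuousOn.intervalIntegrable (by fun_prop)
  have hrate_le := intervalIntegral.integral_mono_on hst hrate_int hdissipation_int.neg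
    fun r hr => hx.energyRate_le hB hβ hc hu (hs.trans hr.1)
  simp only [Pi.neg_apply, intervalIntegral.integral_neg] at hrate_le
  linarith

lemma lam_mul_norm_le (hx : IsTrajectory B γ lam x xd xdd)
    (hc : AdmissibleCoefficients β θ γ lam) {t : ℝ} (ht : 0 ≤ t) :
    lam 0 * ‖B (x t)‖ ≤ ‖xdd t‖ + γ 0 * ‖xd t‖ := by
  have hγ := (hc.γ_pos t ht).le
  have hlam := (hc.lam_pos t ht).le
  calc lam 0 * ‖B (x t)‖ ≤ lam t * ‖B (x t)‖ := by gcongr; exact hc.le_lam ht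
    _ = ‖xdd t + γ t • xd t‖ := by
      rw [eq_neg_of_add_eq_zero_left (hx.ode t ht), norm_neg, norm_smul, Real.norm_of_nonneg hlam]
    _ ≤ ‖xdd t‖ + γ t * ‖xd t‖ := by
      rw [← Real.norm_of_nonneg hγ, ← norm_smul, Real.norm_of_nonneg hγ]
      exact norm_add_le _ _
    _ ≤ ‖xdd t‖ + γ 0 * ‖xd t‖ := by gcongr; exact hc.γ_le ht

lemma norm_acceleration_le (hx : IsTrajectory B γ lam x xd xdd) (hβ : 0 < β) (hθ : 0 < θ)
    (hc : AdmissibleCoefficients β θ γ lam) {t : ℝ} (ht : 0 ≤ t) :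
    ‖xdd t‖ ≤ γ 0 * ‖xd t‖ + β * γ 0 ^ 2 / (1 + θ) * ‖B (x t)‖ := by
  have hode : xdd t = -(γ t • xd t + lam t • B (x t)) :=
    eq_neg_of_add_eq_zero_left (by rw [← add_assoc, hx.ode t ht])
  rw [hode, norm_neg]
  refine (norm_add_le _ _).trans ?_
  rw [norm_smul, norm_smul, Real.norm_of_nonneg (hc.γ_pos t ht).le,
    Real.norm_of_nonneg (hc.lam_pos t ht).le]
  gcongr
  exacts [hc.γ_le ht, hc.lam_le hβ hθ ht]

variable (hx : IsTrajectory B γ lam x xd xdd) (hB : Cocoercive β B) (hβ : 0 < β) (hθ : 0 < θ)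
  (hc : AdmissibleCoefficients β θ γ lam)

include hx hB hβ hθ hc

lemma antitoneOn_energy (hu : B u = 0) : AntitoneOn (energy β γ lam x xd u) (Ici 0) := by
  intro s hs t _ hst
  have hdissipation : 0 ≤ ∫ r in s..t, (θ * ‖xd r‖ ^ 2 + (1 + θ) / γ 0 ^ 2 * ‖xdd r‖ ^ 2) :=
    intervalIntegral.integral_nonneg hst fun r _ => by positivity
  linarith [hx.energy_add_integral_le hB hβ hc hu hs hst]

lemma exists_tendsto_energy (hu : B u = 0) :
    ∃ l, Tendsto (energy β γ lam x xd u) atTop (𝓝 l) :=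
  exists_tendsto_atTop_of_antitoneOn_Ici (hx.antitoneOn_energy hB hβ hθ hc hu) fun _ ht =>
    hc.energy_nonneg hθ x xd u ht

lemma exists_norm_sub_le (hu : B u = 0) : ∃ C, ∀ t ≥ 0, ‖x t - u‖ ≤ C := by
  obtain ⟨g, hg, hgγ⟩ := hc.exists_pos_le_γ hβ hθ
  refine ⟨√(energy β γ lam x xd u 0 / (g / 8)), fun t ht => Real.le_sqrt_of_sq_le ?_⟩
  have hγ := hc.γ_pos t ht
  rw [le_div_iff₀' (by positivity)]
  calc g / 8 * ‖x t - u‖ ^ 2 ≤ γ t / 8 * ‖x t - u‖ ^ 2 + 1 / (3 * γ t) * ‖xd t‖ ^ 2 :=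
        le_add_of_le_of_nonneg (by gcongr; exact hgγ t ht) (by positivity)
    _ ≤ energy β γ lam x xd u t := hc.norm_sq_add_norm_sq_le_energy hθ x xd u ht
    _ ≤ energy β γ lam x xd u 0 := hx.antitoneOn_energy hB hβ hθ hc hu self_mem_Ici ht ht

lemma exists_norm_le (hzer : ∃ u, B u = 0) : ∃ C, ∀ t ≥ 0, ‖x t‖ ≤ C := by
  obtain ⟨u, hu⟩ := hzer
  obtain ⟨C, hC⟩ := hx.exists_norm_sub_le hB hβ hθ hc hu
  exact ⟨‖u‖ + C, fun t ht => (norm_le_norm_add_norm_sub' (x t) u).trans (by gcongr; exact hC t ht)⟩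

lemma exists_norm_velocity_le (hzer : ∃ u, B u = 0) : ∃ C, ∀ t ≥ 0, ‖xd t‖ ≤ C := by
  obtain ⟨u, hu⟩ := hzer
  have hγ₀ := hc.γ_pos 0 le_rfl
  refine ⟨√(energy β γ lam x xd u 0 / (1 / (3 * γ 0))), fun t ht => Real.le_sqrt_of_sq_le ?_⟩
  have hγ := hc.γ_pos t ht
  rw [le_div_iff₀' (by positivity)]
  calc 1 / (3 * γ 0) * ‖xd t‖ ^ 2 ≤ γ t / 8 * ‖x t - u‖ ^ 2 + 1 / (3 * γ t) * ‖xd t‖ ^ 2 :=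
        le_add_of_nonneg_of_le (by positivity) (by gcongr; exact hc.γ_le ht)
    _ ≤ energy β γ lam x xd u t := hc.norm_sq_add_norm_sq_le_energy hθ x xd u ht
    _ ≤ energy β γ lam x xd u 0 := hx.antitoneOn_energy hB hβ hθ hc hu self_mem_Ici ht ht

lemma integrableOn_dissipation (hzer : ∃ u, B u = 0) :
    IntegrableOn (fun t => θ * ‖xd t‖ ^ 2 + (1 + θ) / γ 0 ^ 2 * ‖xdd t‖ ^ 2) (Ici 0) := by
  obtain ⟨u, hu⟩ := hzer
  have hxd_cont := hx.continuousOn_velocity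
  have hxdd_cont := hx.continuousOn_acceleration
  refine integrableOn_Ici_of_intervalIntegral_le (C := energy β γ lam x xd u 0) (by fun_prop)
    (fun _ _ => by positivity) fun t ht => ?_
  linarith [hx.energy_add_integral_le hB hβ hc hu le_rfl ht, hc.energy_nonneg hθ x xd u ht]

lemma integrableOn_sq_norm_velocity (hzer : ∃ u, B u = 0) :
    IntegrableOn (fun t => ‖xd t‖ ^ 2) (Ici 0) := by
  refine Integrable.mono' ((hx.integrableOn_dissipation hB hβ hθ hc hzer).div_const θ)
    ((hx.continuousOn_velocity.norm.pow 2).aestronglyMeasurable measurableSet_Ici)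
    (ae_of_all _ fun t => ?_)
  rw [norm_pow, norm_norm, le_div_iff₀' hθ]
  exact le_add_of_nonneg_right (by positivity)

lemma integrableOn_sq_norm_acceleration (hzer : ∃ u, B u = 0) :
    IntegrableOn (fun t => ‖xdd t‖ ^ 2) (Ici 0) := by
  have hγ₀ := hc.γ_pos 0 le_rfl
  refine Integrable.mono'
    ((hx.integrableOn_dissipation hB hβ hθ hc hzer).div_const ((1 + θ) / γ 0 ^ 2))
    ((hx.continuousOn_acceleration.norm.pow 2).aestronglyMeasurable measurableSet_Ici)
    (ae_of_all _ fun t => ?_)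
  rw [norm_pow, norm_norm, le_div_iff₀' (by positivity)]
  exact le_add_of_nonneg_left (by positivity)

lemma integrableOn_sq_norm_operator (hzer : ∃ u, B u = 0) :
    IntegrableOn (fun t => ‖B (x t)‖ ^ 2) (Ici 0) := by
  have hxdd := hx.integrableOn_sq_norm_acceleration hB hβ hθ hc hzer
  have hxd := hx.integrableOn_sq_norm_velocity hB hβ hθ hc hzer
  have hBx_cont := (hB.lipschitzWith hβ).continuous.comp_continuousOn hx.continuousOn
  refine Integrable.mono' (((hxdd.add (hxd.const_mul (γ 0 ^ 2))).const_mul 2).div_const (lam 0 ^ 2))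
    ((hBx_cont.norm.pow 2).aestronglyMeasurable measurableSet_Ici) ?_
  filter_upwards [ae_restrict_mem measurableSet_Ici] with t ht
  have hlam₀ := hc.lam_pos 0 le_rfl
  rw [norm_pow, norm_norm, le_div_iff₀' (by positivity)]
  calc lam 0 ^ 2 * ‖B (x t)‖ ^ 2 = (lam 0 * ‖B (x t)‖) ^ 2 := (mul_pow _ _ _).symm
    _ ≤ (‖xdd t‖ + γ 0 * ‖xd t‖) ^ 2 := by gcongr; exact hx.lam_mul_norm_le hc ht
    _ ≤ 2 * (‖xdd t‖ ^ 2 + (γ 0 * ‖xd t‖) ^ 2) := add_sq_le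
    _ = 2 * (‖xdd t‖ ^ 2 + γ 0 ^ 2 * ‖xd t‖ ^ 2) := by rw [mul_pow]

lemma tendsto_velocity (hzer : ∃ u, B u = 0) : Tendsto xd atTop (𝓝 0) :=
  tendsto_zero_of_integrableOn_sq_norm_deriv
    (fun t ht => (hx.hasDerivWithinAt_velocity t (le_of_lt ht)).hasDerivAt (Ici_mem_nhds ht))
    (hx.continuousOn_acceleration.mono Ioi_subset_Ici_self)
    ((hx.integrableOn_sq_norm_velocity hB hβ hθ hc hzer).mono_set Ioi_subset_Ici_self)
    ((hx.integrableOn_sq_norm_acceleration hB hβ hθ hc hzer).mono_set Ioi_subset_Ici_self)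

lemma tendsto_operator (hzer : ∃ u, B u = 0) : Tendsto (fun t => B (x t)) atTop (𝓝 0) := by
  obtain ⟨C, hC⟩ := hx.exists_norm_velocity_le hB hβ hθ hc hzer
  have hx_lip : LipschitzOnWith (Real.toNNReal C) x (Ici 0) :=
    (convex_Ici 0).lipschitzOnWith_of_nnnorm_hasDerivWithin_le hx.hasDerivWithinAt fun t ht =>
      NNReal.le_toNNReal_of_coe_le (hC t ht)
  exact tendsto_zero_of_uniformContinuousOn_of_integrableOn_norm_pow
    ((hB.lipschitzWith hβ).uniformContinuous.comp_uniformContinuousOn hx_lip.uniformContinuousOn)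
    (hx.integrableOn_sq_norm_operator hB hβ hθ hc hzer)

lemma tendsto_acceleration (hzer : ∃ u, B u = 0) : Tendsto xdd atTop (𝓝 0) := by
  have hxd := hx.tendsto_velocity hB hβ hθ hc hzer
  have hBx := hx.tendsto_operator hB hβ hθ hc hzer
  have hbound :
      Tendsto (fun t => γ 0 * ‖xd t‖ + β * γ 0 ^ 2 / (1 + θ) * ‖B (x t)‖) atTop (𝓝 0) := by
    simpa using (hxd.norm.const_mul (γ 0)).add (hBx.norm.const_mul (β * γ 0 ^ 2 / (1 + θ)))
  refine squeeze_zero_norm' ?_ hbound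
  filter_upwards [eventually_ge_atTop 0] with t ht using hx.norm_acceleration_le hβ hθ hc ht

lemma tendsto_inner_velocity (hu : B u = 0) :
    Tendsto (fun t => ⟪x t - u, xd t⟫) atTop (𝓝 0) := by
  obtain ⟨C, hC⟩ := hx.exists_norm_sub_le hB hβ hθ hc hu
  have hbound : Tendsto (fun t => C * ‖xd t‖) atTop (𝓝 0) := by
    simpa using (hx.tendsto_velocity hB hβ hθ hc ⟨u, hu⟩).norm.const_mul C
  refine squeeze_zero_norm' ?_ hbound
  filter_upwards [eventually_ge_atTop 0] with t ht
  exact (norm_inner_le_norm _ _).trans (by gcongr; exact hC t ht)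

lemma exists_tendsto_norm_sub (hu : B u = 0) : ∃ r, Tendsto (fun t => ‖x t - u‖) atTop (𝓝 r) := by
  obtain ⟨g, hg, hgγ⟩ := hc.exists_pos_le_γ hβ hθ
  obtain ⟨γ₁, hγ₁⟩ := exists_tendsto_atTop_of_antitoneOn_Ici hc.antitoneOn hgγ
  have hγ₁_ne : γ₁ ≠ 0 := by
    refine (hg.trans_le (ge_of_tendsto hγ₁ ?_)).ne'
    filter_upwards [eventually_ge_atTop 0] with t ht using hgγ t ht
  obtain ⟨q, hq⟩ := exists_tendsto_atTop_of_antitoneOn_Ici hc.antitoneOn_div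
    fun t ht => (div_pos (hc.γ_pos t ht) (hc.lam_pos t ht)).le
  have hxd := hx.tendsto_velocity hB hβ hθ hc ⟨u, hu⟩
  have hkinetic : Tendsto (fun t => 2 * β * (γ t / lam t * (‖xd t‖ ^ 2 / 2))) atTop (𝓝 0) := by
    simpa using (hq.mul ((hxd.norm.pow 2).div_const 2)).const_mul (2 * β)
  obtain ⟨l, hl⟩ := hx.exists_tendsto_energy hB hβ hθ hc hu
  have hinner := hx.tendsto_inner_velocity hB hβ hθ hc hu
  refine ⟨_, ((((hl.sub hinner).sub hkinetic).div hγ₁ hγ₁_ne).const_mul 2).sqrt.congr' ?_⟩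
  filter_upwards [eventually_ge_atTop 0] with t ht
  have hγ := hc.γ_pos t ht
  rw [← Real.sqrt_sq (norm_nonneg (x t - u))]
  congr 1
  simp only [energy, Pi.div_apply]
  field_simp
  ring

lemma exists_tendstoWeakly [CompleteSpace H] (hzer : ∃ u, B u = 0) :
    ∃ p, B p = 0 ∧ TendstoWeakly x atTop p := by
  obtain ⟨C, hC⟩ := hx.exists_norm_le hB hβ hθ hc hzer
  have hBx := hx.tendsto_operator hB hβ hθ hc hzer
  refine exists_tendstoWeakly_of_forall_tendsto_norm_sub (S := {u | B u = 0}) hzer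
    (fun u hu => hx.exists_tendsto_norm_sub hB hβ hθ hc hu) fun U p hU hp => ?_
  exact hB.eq_of_tendstoWeakly hβ (hU ((eventually_ge_atTop 0).mono hC)) hp (hBx.mono_left hU)

end IsTrajectory

theorem stmt9_general [CompleteSpace H] {β θ : ℝ} (hβ : 0 < β) (hθ : 0 < θ) {B : H → H}
    (hB : Cocoercive β B) (hzer : ∃ u : H, B u = 0) {γ lam : ℝ → ℝ}
    (hc : AdmissibleCoefficients β θ γ lam) {x xd xdd : ℝ → H}
    (hx : IsTrajectory B γ lam x xd xdd) :
    (∃ C : ℝ, ∀ t ≥ (0:ℝ), ‖x t‖ ≤ C) ∧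
    IntegrableOn (fun t => ‖xd t‖ ^ 2) (Ici 0) ∧
    IntegrableOn (fun t => ‖xdd t‖ ^ 2) (Ici 0) ∧
    IntegrableOn (fun t => ‖B (x t)‖ ^ 2) (Ici 0) ∧
    Tendsto xd atTop (𝓝 0) ∧
    Tendsto xdd atTop (𝓝 0) ∧
    Tendsto (fun t => B (x t)) atTop (𝓝 0) ∧
    ∃ p : H, B p = 0 ∧ ∀ z : H, Tendsto (fun t => ⟪x t - p, z⟫) atTop (𝓝 0) := by
  refine ⟨hx.exists_norm_le hB hβ hθ hc hzer, hx.integrableOn_sq_norm_velocity hB hβ hθ hc hzer,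
    hx.integrableOn_sq_norm_acceleration hB hβ hθ hc hzer,
    hx.integrableOn_sq_norm_operator hB hβ hθ hc hzer, hx.tendsto_velocity hB hβ hθ hc hzer,
    hx.tendsto_acceleration hB hβ hθ hc hzer, hx.tendsto_operator hB hβ hθ hc hzer, ?_⟩
  obtain ⟨p, hBp, hp⟩ := hx.exists_tendstoWeakly hB hβ hθ hc hzer
  exact ⟨p, hBp, fun z => by simpa [inner_sub_left] using (hp z).sub_const ⟪p, z⟫⟩

end InnerProductSpace

/-- Asymptotic behaviour of the second order dynamics
`ẍ(t) + γ(t)ẋ(t) + λ(t)B(x(t)) = 0` governed by a `β`-cocoercive operator `B`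
with `zer B ≠ ∅`, under the conditions `γ̇ ≤ 0 ≤ λ̇` and `γ²/λ ≥ (1+θ)/β` a.e.:
the trajectory is bounded, `ẋ, ẍ, B∘x ∈ L²`, all of `ẋ(t), ẍ(t), B(x(t))` tend
to `0`, and `x(t)` converges weakly to a zero of `B`. -/
theorem stmt9
    {H : Type*} [NormedAddCommGroup H] [InnerProductSpace ℝ H] [CompleteSpace H]
    (β : ℝ) (hβ : 0 < β) (B : H → H)
    (hB : ∀ a c : H, β * ‖B a - B c‖ ^ 2 ≤ ⟪a - c, B a - B c⟫)
    (hzer : ∃ u : H, B u = 0)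
    (γ lam γ' lam' : ℝ → ℝ)
    (hγpos : ∀ t ≥ (0:ℝ), 0 < γ t) (hlampos : ∀ t ≥ (0:ℝ), 0 < lam t)
    (hγd : ∀ᵐ t ∂(volume.restrict (Ici (0:ℝ))), HasDerivAt γ (γ' t) t)
    (hlamd : ∀ᵐ t ∂(volume.restrict (Ici (0:ℝ))), HasDerivAt lam (lam' t) t)
    (hγfund : ∀ t ≥ (0:ℝ), γ t = γ 0 + ∫ s in (0:ℝ)..t, γ' s)
    (hlamfund : ∀ t ≥ (0:ℝ), lam t = lam 0 + ∫ s in (0:ℝ)..t, lam' s)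
    (θ : ℝ) (hθ : 0 < θ)
    (hA1 : ∀ᵐ t ∂(volume.restrict (Ici (0:ℝ))),
      γ' t ≤ 0 ∧ 0 ≤ lam' t ∧ (1 + θ) / β ≤ γ t ^ 2 / lam t)
    (x xd xdd : ℝ → H) (u₀ v₀ : H) (hx0 : x 0 = u₀) (hxd0 : xd 0 = v₀)
    (hx : ∀ t : ℝ, HasDerivAt x (xd t) t)
    (hxd : ∀ t : ℝ, HasDerivAt xd (xdd t) t)
    (hxddcont : Continuous xdd)
    (hode : ∀ t ≥ (0:ℝ), xdd t + γ t • xd t + lam t • B (x t) = 0) :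
    (∃ C : ℝ, ∀ t ≥ (0:ℝ), ‖x t‖ ≤ C) ∧
    IntegrableOn (fun t => ‖xd t‖ ^ 2) (Ici 0) ∧
    IntegrableOn (fun t => ‖xdd t‖ ^ 2) (Ici 0) ∧
    IntegrableOn (fun t => ‖B (x t)‖ ^ 2) (Ici 0) ∧
    Tendsto xd atTop (𝓝 0) ∧
    Tendsto xdd atTop (𝓝 0) ∧
    Tendsto (fun t => B (x t)) atTop (𝓝 0) ∧
    ∃ p : H, B p = 0 ∧ ∀ z : H, Tendsto (fun t => ⟪x t - p, z⟫) atTop (𝓝 0) :=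
  stmt9_general hβ hθ hB hzer
    (.of_ae_deriv hβ hθ hγpos hlampos hγd hlamd hγfund hlamfund hA1)
    ⟨fun t _ => (hx t).hasDerivWithinAt, fun t _ => (hxd t).hasDerivWithinAt,
      hxddcont.continuousOn, hode⟩
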